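/- (Johnson) Let A be a C*-algebra and X a Banach A-bimodule. Then every bounded Jordan derivation D : A → X, i.e., every bounded linear map satisfying D(a²) = a·D(a) + D(a)·a for all a ∈ A, is an associative derivation: D(ab) = a·D(b) + D(a)·b for all a, b ∈ A. -/

import Mathlib

open NormedSpace Filter Topology

/-- If the one-parameter group generated by `i * T` is bounded, there are uniformly bounded
ergodic means which almost annihilate the range of `T` and fix its kernel. -/
theorem exists_ergodic_mean {E : Type*} [NormedAddCommGroup E] [NormedSpace ℂ E] [CompleteSpace E]
    (T : E →L[ℂ] E) {C : ℝ} (hC : ∀ t : ℝ, ‖exp ((t * Complex.I) • T)‖ ≤ C)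
    {ε : ℝ} (hε : 0 < ε) :
    ∃ M : E →L[ℂ] E, ‖M‖ ≤ C ∧ (∀ S, Commute S T → Commute S M) ∧
      (∀ w, T w = 0 → M w = w) ∧ ‖M * T‖ ≤ ε := by
  let : NormedAlgebra ℚ (E →L[ℂ] E) := .restrictScalars ℚ ℂ _
  have hC0 : 0 ≤ C := (norm_nonneg _).trans (hC 0)
  have hder : HasDerivAt (fun z : ℂ => exp (z • T)) T 0 := by
    simpa using! hasDerivAt_exp_smul_const (𝕂 := ℂ) T 0
  -- choose a small time step along the imaginary axis
  obtain ⟨h, hh, hstep⟩ : ∃ h : ℝ, 0 < h ∧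
      ‖exp ((h * Complex.I) • T) - 1 - (h * Complex.I) • T‖ ≤ ε / (2 * (C + 1)) * h := by
    have hlo := hder.isLittleO.def (show 0 < ε / (2 * (C + 1)) by positivity)
    have htend : Tendsto (fun h : ℝ => (h : ℂ) * Complex.I) (𝓝[>] 0) (𝓝 0) := by
      have : Tendsto (fun h : ℝ => (h : ℂ) * Complex.I) (𝓝 0) (𝓝 ((0 : ℝ) * Complex.I)) :=
        (by fun_prop : Continuous fun h : ℝ => (h : ℂ) * Complex.I).tendsto 0
      simpa using this.mono_left nhdsWithin_le_nhds
    obtain ⟨h, hlo', hh⟩ := ((htend.eventually hlo).and self_mem_nhdsWithin).exists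
    refine ⟨h, hh, ?_⟩
    simpa [abs_of_pos (show 0 < h from hh)] using hlo'
  set V := exp ((h * Complex.I) • T) with hV
  have hVpow : ∀ k : ℕ, V ^ k = exp (((k * h : ℝ) * Complex.I) • T) := by
    intro k
    rw [hV, ← exp_nsmul]
    congr 1
    rw [← Nat.cast_smul_eq_nsmul ℂ, smul_smul]
    push_cast
    ring_nf
  obtain ⟨N, hN⟩ := exists_nat_gt (2 * (C + ‖(1 : E →L[ℂ] E)‖) / (h * ε))
  have hNpos : (0 : ℝ) < N := lt_of_le_of_lt (by positivity) hN
  set M := ((N : ℂ)⁻¹) • ∑ k ∈ Finset.range N, V ^ k with hM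
  have hMnorm : ‖M‖ ≤ C := by
    rw [hM, norm_smul]
    have : ‖∑ k ∈ Finset.range N, V ^ k‖ ≤ N * C := by
      refine (norm_sum_le_of_le _ (fun k _ => ?_ : ∀ k ∈ Finset.range N, ‖V ^ k‖ ≤ C)).trans ?_
      · rw [hVpow]; exact hC _
      · simp
    calc ‖(N : ℂ)⁻¹‖ * _ ≤ (N : ℝ)⁻¹ * (N * C) := by
          rw [norm_inv, Complex.norm_natCast]; gcongr
      _ = C := by field_simp
  refine ⟨M, hMnorm, fun S hS => ?_, fun w hw => ?_, ?_⟩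
  · have hSV : Commute S V := (hS.smul_right _).exp_right
    exact (Commute.sum_right _ _ _ fun k _ => hSV.pow_right k).smul_right _
  · have hVw : V w = w := by
      have hs := (NormedSpace.exp_series_hasSum_exp' (𝕂 := ℂ) ((h * Complex.I) • T)).mapL
        (ContinuousLinearMap.apply ℂ E w)
      refine hs.unique ?_
      convert hasSum_single 0 ?_ using 1
      · simp
      · intro n hn
        obtain ⟨m, rfl⟩ := Nat.exists_eq_succ_of_ne_zero hn
        rw [ContinuousLinearMap.apply_apply, smul_apply, pow_succ, mul_apply_eq_comp, smul_apply, hw,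
          smul_zero, map_zero, smul_zero]
    have hVk : ∀ k : ℕ, (V ^ k) w = w := by
      intro k
      induction k with
      | zero => simp
      | succ k ih => rw [pow_succ, mul_apply_eq_comp, hVw, ih]
    have hN' : (N : ℂ) ≠ 0 := by exact_mod_cast hNpos.ne'
    simp only [hM, smul_apply, sum_apply, hVk,
      Finset.sum_const, Finset.card_range, ← Nat.cast_smul_eq_nsmul ℂ]
    rw [smul_smul, inv_mul_cancel₀ hN', one_smul]
  · have hgeom : M * (V - 1) = ((N : ℂ)⁻¹) • (V ^ N - 1) := by
      rw [hM, smul_mul_assoc, geom_sum_mul]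
    have hsplit : (h * Complex.I) • (M * T) =
        ((N : ℂ)⁻¹) • (V ^ N - 1) - M * (V - 1 - (h * Complex.I) • T) := by
      rw [mul_sub M (V - 1), hgeom, mul_smul_comm]; abel
    have hnorm : h * ‖M * T‖ ≤ (N : ℝ)⁻¹ * (C + ‖(1 : E →L[ℂ] E)‖) +
        C * (ε / (2 * (C + 1)) * h) := by
      have h1 : h * ‖M * T‖ = ‖(h * Complex.I) • (M * T)‖ := by
        rw [norm_smul]; simp [abs_of_pos hh]
      rw [h1, hsplit]
      refine (norm_sub_le _ _).trans (add_le_add ?_ ?_)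
      · rw [norm_smul, norm_inv, Complex.norm_natCast]
        gcongr
        refine (norm_sub_le _ _).trans ?_
        gcongr
        rw [hVpow]; exact hC _
      · exact (norm_mul_le _ _).trans (mul_le_mul hMnorm hstep (norm_nonneg _) hC0)
    have hfirst : (N : ℝ)⁻¹ * (C + ‖(1 : E →L[ℂ] E)‖) ≤ h * (ε / 2) := by
      rw [div_lt_iff₀ (by positivity)] at hN
      rw [inv_mul_le_iff₀ hNpos]
      linarith
    have hsecond : C * (ε / (2 * (C + 1)) * h) ≤ h * (ε / 2) := by
      have : C / (C + 1) ≤ 1 := (div_le_one (by positivity)).2 (by linarith)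
      calc C * (ε / (2 * (C + 1)) * h) = C / (C + 1) * (h * (ε / 2)) := by field_simp
        _ ≤ 1 * (h * (ε / 2)) := by gcongr
        _ = _ := one_mul _
    exact le_of_mul_le_mul_left (by linarith) hh

/-- For commuting generators `S`, `T` of bounded groups, the joint kernel meets the sum of the
ranges trivially. -/
theorem eq_zero_of_mem_ker_of_eq_sub {E : Type*} [NormedAddCommGroup E] [NormedSpace ℂ E]
    [CompleteSpace E] {S T : E →L[ℂ] E} (hST : Commute S T) {C : ℝ}
    (hS : ∀ t : ℝ, ‖exp ((t * Complex.I) • S)‖ ≤ C)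
    (hT : ∀ t : ℝ, ‖exp ((t * Complex.I) • T)‖ ≤ C)
    {w u v : E} (hw : w = T u - S v) (hSw : S w = 0) (hTw : T w = 0) : w = 0 := by
  have hC0 : 0 ≤ C := (norm_nonneg _).trans (hS 0)
  have hbound : ∀ ε : ℝ, 0 < ε → ‖w‖ ≤ ε * (C * (‖u‖ + ‖v‖)) := by
    intro ε hε
    obtain ⟨M, hM, hMc, hMw, hMS⟩ := exists_ergodic_mean S hS hε
    obtain ⟨N, hN, hNc, hNw, hNT⟩ := exists_ergodic_mean T hT hε
    have hMN : Commute M N := hNc M (hMc T hST.symm).symm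
    have key : w = M ((N * T) u) - N ((M * S) v) := by
      have h1 : M (N w) = w := by rw [hNw w hTw, hMw w hSw]
      have h2 : M (N (S v)) = N (M (S v)) := congrArg (fun F : E →L[ℂ] E => F (S v)) hMN.eq
      conv_lhs => rw [← h1, hw]
      simp [map_sub, h2]
    have hu : ‖M ((N * T) u)‖ ≤ C * (ε * ‖u‖) :=
      M.le_of_opNorm_le_of_le hM ((N * T).le_of_opNorm_le hNT u)
    have hv : ‖N ((M * S) v)‖ ≤ C * (ε * ‖v‖) :=
      N.le_of_opNorm_le_of_le hN ((M * S).le_of_opNorm_le hMS v)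
    calc ‖w‖ = ‖M ((N * T) u) - N ((M * S) v)‖ := by rw [← key]
      _ ≤ _ := norm_sub_le _ _
      _ ≤ C * (ε * ‖u‖) + C * (ε * ‖v‖) := add_le_add hu hv
      _ = _ := by ring
  by_contra hne
  have hpos : 0 < ‖w‖ := norm_pos_iff.2 hne
  set K := C * (‖u‖ + ‖v‖) with hK
  have hK0 : 0 ≤ K := by positivity
  have := hbound (‖w‖ / (2 * (K + 1))) (by positivity)
  have h2 : ‖w‖ / (2 * (K + 1)) * K ≤ ‖w‖ / 2 := by
    rw [div_mul_eq_mul_div, div_le_div_iff₀ (by positivity) (by positivity)]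
    nlinarith
  linarith

/-- Bounded representations of a C⋆-algebra send self-adjoint elements to generators of bounded
groups. -/
theorem exists_norm_exp_map_le {A B : Type*} [NonUnitalCStarAlgebra A] [NormedRing B]
    [NormedAlgebra ℂ B] [CompleteSpace B] (φ : A →L[ℂ] B) (hφ : ∀ a b, φ (a * b) = φ a * φ b) :
    ∃ C : ℝ, ∀ a : A, IsSelfAdjoint a → ∀ t : ℝ, ‖exp ((t * Complex.I) • φ a)‖ ≤ C := by
  let : NormedAlgebra ℚ B := .restrictScalars ℚ ℂ _
  let : NormedAlgebra ℚ (Unitization ℂ A) := .restrictScalars ℚ ℂ _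
  let ψ : A →ₙₐ[ℂ] B :=
    { toFun := φ, map_smul' := φ.map_smul, map_zero' := φ.map_zero, map_add' := φ.map_add,
      map_mul' := hφ }
  let Φ : Unitization ℂ A →ₐ[ℂ] B := Unitization.lift ψ
  have hΦ : ∀ x, Φ x = algebraMap ℂ B x.fst + φ x.snd := fun x => rfl
  have hΦc : Continuous Φ := by
    have : (Φ : Unitization ℂ A → B) = fun x => algebraMap ℂ B x.fst + φ x.snd := funext hΦ
    rw [this]
    exact ((continuous_algebraMap ℂ B).comp Unitization.continuous_fst).add
      (φ.continuous.comp Unitization.continuous_snd)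
  refine ⟨‖(1 : B)‖ + ‖φ‖ * 2, fun a ha t => ?_⟩
  set x : Unitization ℂ A := (t * Complex.I) • (a : Unitization ℂ A) with hx
  have hexp : exp ((t * Complex.I) • φ a) = Φ (exp x) := by
    rw [NormedSpace.map_exp Φ hΦc, hx, map_smul, hΦ]
    simp
  have hunit : exp x ∈ unitary (Unitization ℂ A) := by
    refine exp_mem_unitary_of_mem_skewAdjoint ?_
    rw [skewAdjoint.mem_iff, hx, star_smul, (ha.inr ℂ).star_eq]
    simp
  have hn : ‖exp x‖ ≤ 1 := CStarRing.norm_of_mem_unitary hunit |>.le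
  have hfst : ‖(exp x).fst‖ ≤ 1 := by
    refine le_trans ?_ hn
    rw [Unitization.norm_eq_sup]
    exact le_sup_left
  have hsnd : ‖(exp x).snd‖ ≤ 2 := by
    have hdec : ((exp x).snd : Unitization ℂ A) =
        exp x - algebraMap ℂ (Unitization ℂ A) (exp x).fst := by
      rw [eq_sub_iff_add_eq', Unitization.algebraMap_eq_inl]
      exact Unitization.inl_fst_add_inr_snd_eq _
    rw [← Unitization.norm_inr (𝕜 := ℂ), hdec]
    refine (norm_sub_le _ _).trans ?_
    rw [norm_algebraMap']
    linarith
  rw [hexp, hΦ]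
  refine (norm_add_le _ _).trans (add_le_add ?_ ?_)
  · rw [norm_algebraMap]
    exact mul_le_of_le_one_left (norm_nonneg _) hfst
  · exact φ.le_opNorm_of_le hsnd

/-- Up to a small error, `x` factors through `star x * x`. -/
theorem exists_norm_sub_mul_mul_star_mul_self_le {A : Type*} [NonUnitalCStarAlgebra A] (x : A)
    {δ : ℝ} (hδ : 0 < δ) : ∃ g : A, ‖x - x * (g * (star x * x))‖ ^ 2 ≤ δ := by
  set n := star x * x with hn
  have hsa : IsSelfAdjoint n := .star_mul_self x
  have hpos : ∀ t : ℝ, δ ^ 2 + t ^ 2 ≠ 0 := fun t => by positivity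
  let q : ℝ → ℝ := fun t => t / (δ ^ 2 + t ^ 2)
  have hq : Continuous q := continuous_id.div (by fun_prop) hpos
  have hq0 : q 0 = 0 := by simp [q]
  let f : ℝ → ℝ := fun t => q t * t
  have hf : Continuous f := hq.mul continuous_id
  have hf0 : f 0 = 0 := by simp [f]
  have he : cfcₙ q n * n = cfcₙ f n := by
    rw [cfcₙ_mul q (fun t => t) n hq.continuousOn hq0, cfcₙ_id' ℝ n]
  have hes : star (cfcₙ f n) = cfcₙ f n := cfcₙ_predicate f n
  refine ⟨cfcₙ q n, ?_⟩
  rw [he, sq, ← CStarRing.norm_star_mul_self]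
  have hexp : star (x - x * cfcₙ f n) * (x - x * cfcₙ f n) =
      n - n * cfcₙ f n - (cfcₙ f n * n - cfcₙ f n * (n * cfcₙ f n)) := by
    rw [star_sub, star_mul, hes, hn]
    noncomm_ring
  have hcfc : n - n * cfcₙ f n - (cfcₙ f n * n - cfcₙ f n * (n * cfcₙ f n)) =
      cfcₙ (fun t => t - t * f t - (f t * t - f t * (t * f t))) n := by
    have hc := hf.continuousOn (s := quasispectrum ℝ n)
    have hi := continuousOn_id' (quasispectrum ℝ n)
    rw [cfcₙ_sub (fun t => t - t * f t) (fun t => f t * t - f t * (t * f t)) n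
        (hi.sub (hi.mul hc)) (by simp) ((hc.mul hi).sub (hc.mul (hi.mul hc))) (by simp),
      cfcₙ_sub (fun t => t) (fun t => t * f t) n hi rfl (hi.mul hc) (by simp),
      cfcₙ_sub (fun t => f t * t) (fun t => f t * (t * f t)) n (hc.mul hi) (by simp)
        (hc.mul (hi.mul hc)) (by simp),
      cfcₙ_mul f (fun t => t * f t) n hc hf0 (hi.mul hc) (by simp),
      cfcₙ_mul f (fun t => t) n hc hf0 hi rfl,
      cfcₙ_mul (fun t => t) f n hi rfl hc hf0, cfcₙ_id' ℝ n]
  rw [hexp, hcfc]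
  refine norm_cfcₙ_le fun t _ => ?_
  have hval : t - t * f t - (f t * t - f t * (t * f t)) =
      t * (δ ^ 2 / (δ ^ 2 + t ^ 2)) ^ 2 := by
    have := hpos t
    simp only [f, q]
    field_simp
    ring
  have hle : δ ^ 2 / (δ ^ 2 + t ^ 2) ≤ 1 := by
    rw [div_le_one (by positivity)]
    nlinarith [sq_nonneg t]
  have hnn : 0 ≤ δ ^ 2 / (δ ^ 2 + t ^ 2) := by positivity
  rw [hval, Real.norm_eq_abs, abs_mul, abs_of_nonneg (pow_nonneg hnn 2)]
  calc |t| * (δ ^ 2 / (δ ^ 2 + t ^ 2)) ^ 2 ≤ |t| * (δ ^ 2 / (δ ^ 2 + t ^ 2)) := by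
        gcongr
        exact pow_le_of_le_one hnn hle two_ne_zero
    _ ≤ δ := by
        rw [mul_div_assoc', div_le_iff₀ (by positivity)]
        nlinarith [sq_nonneg (δ - |t|), sq_abs t, abs_nonneg t, mul_pos hδ hδ, hδ.le,
          mul_nonneg hδ.le (sq_nonneg (δ - |t|)), mul_nonneg hδ.le (sq_nonneg δ),
          mul_nonneg hδ.le (sq_nonneg t)]

/-- A closed left ideal of a C⋆-algebra containing `star x * x` contains `x`. -/
theorem mem_of_star_mul_self_mem {A : Type*} [NonUnitalCStarAlgebra A] {J : Set A}
    (hJ : IsClosed J) (hmul : ∀ a, ∀ j ∈ J, a * j ∈ J) {x : A} (hx : star x * x ∈ J) : x ∈ J := by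
  rw [← hJ.closure_eq, Metric.mem_closure_iff]
  intro ε hε
  obtain ⟨g, hg⟩ := exists_norm_sub_mul_mul_star_mul_self_le x (show 0 < (ε / 2) ^ 2 by positivity)
  refine ⟨_, hmul x _ (hmul g _ hx), ?_⟩
  rw [dist_eq_norm]
  have := (pow_le_pow_iff_left₀ (norm_nonneg _) (by positivity) two_ne_zero).1 hg
  linarith

/-- Bounded left and right actions of `A` turning `X` into a Banach `A`-bimodule. -/
structure BimoduleActions (A X : Type*) [NonUnitalNormedRing A] [NormedSpace ℂ A]
    [NormedAddCommGroup X] [NormedSpace ℂ X] where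
  /-- The left action `x ↦ a · x`. -/
  left : A →L[ℂ] X →L[ℂ] X
  /-- The right action `x ↦ x · a`. -/
  right : A →L[ℂ] X →L[ℂ] X
  left_mul : ∀ a b x, left (a * b) x = left a (left b x)
  right_mul : ∀ a b x, right (a * b) x = right b (right a x)
  left_right : ∀ a b x, left a (right b x) = right b (left a x)

namespace BimoduleActions

variable {A X : Type*}

section Algebraic

variable [NonUnitalNormedRing A] [NormedSpace ℂ A]
  [NormedAddCommGroup X] [NormedSpace ℂ X] (m : BimoduleActions A X)

/-- The Jordan derivation identity for a bounded linear map. -/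
def IsJordanDerivation (D : A →L[ℂ] X) : Prop :=
  ∀ a, D (a * a) = m.left a (D a) + m.right a (D a)

/-- The failure of the Leibniz rule at `(a, b)`. -/
noncomputable def defect (D : A →L[ℂ] X) (a b : A) : X :=
  D (a * b) - m.left a (D b) - m.right b (D a)

variable {m} {D : A →L[ℂ] X}

namespace IsJordanDerivation

theorem map_mul_add_mul (hD : m.IsJordanDerivation D) (a b : A) : D (a * b) + D (b * a) =
    m.left a (D b) + m.right b (D a) + (m.left b (D a) + m.right a (D b)) := by
  have h := hD (a + b)
  have ha := hD a
  have hb := hD b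
  simp only [add_mul, mul_add, map_add, add_apply] at h
  rw [ha, hb] at h
  rw [← sub_eq_zero] at h ⊢
  rw [← h]
  abel

theorem map_mul_mul_self (hD : m.IsJordanDerivation D) (a b : A) : D (a * b * a) =
    m.right a (m.right b (D a)) + m.right a (m.left a (D b)) + m.left a (m.left b (D a)) := by
  have h₁ := hD.map_mul_add_mul a (a * b + b * a)
  have h₂ := hD.map_mul_add_mul (a * a) b
  have h₃ := hD.map_mul_add_mul a b
  rw [map_add D (a * b), h₃] at h₁
  rw [hD a] at h₂
  simp only [mul_add, add_mul, map_add, add_apply, m.left_mul, m.right_mul, m.left_right,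
    ← mul_assoc] at h₁ h₂
  have h₄ : (2 : ℂ) • D (a * b * a) = (2 : ℂ) • (m.right a (m.right b (D a)) +
      m.right a (m.left a (D b)) + m.left a (m.left b (D a))) := by
    linear_combination (norm := module) h₁ - h₂
  exact smul_right_injective X (two_ne_zero' ℂ) h₄

theorem map_mul_mul_add (hD : m.IsJordanDerivation D) (a b c : A) :
    D (a * b * c) + D (c * b * a) =
    m.right c (m.right b (D a)) + m.right c (m.left a (D b)) + m.left a (m.left b (D c)) +
    (m.right a (m.right b (D c)) + m.right a (m.left c (D b)) + m.left c (m.left b (D a))) := by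
  have h := hD.map_mul_mul_self (a + c) b
  have ha := hD.map_mul_mul_self a b
  have hc := hD.map_mul_mul_self c b
  simp only [add_mul, mul_add, map_add, add_apply] at h
  linear_combination (norm := module) h - ha - hc

theorem defect_swap (hD : m.IsJordanDerivation D) (a b : A) :
    m.defect D b a = -m.defect D a b := by
  have h := hD.map_mul_add_mul a b
  simp only [defect]
  linear_combination (norm := module) h

theorem right_defect_add_left_defect (hD : m.IsJordanDerivation D) (a b c : A) :
    m.right (a * b - b * a) (m.right c (m.defect D a b)) +
      m.left (a * b - b * a) (m.left c (m.defect D a b)) = 0 := by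
  have h₁ := hD.map_mul_mul_add (a * b) c (b * a)
  have h₂ := hD.map_mul_mul_self a (b * c * b)
  have h₃ := hD.map_mul_mul_self b (a * c * a)
  have h₄ := hD.defect_swap a b
  rw [hD.map_mul_mul_self b c] at h₂
  rw [hD.map_mul_mul_self a c] at h₃
  have h₅ : D (b * a) = m.left b (D a) + m.right a (D b) - m.defect D a b := by
    rw [← neg_neg (m.defect D a b), ← h₄, defect]; abel
  have h₆ : D (a * b) = m.left a (D b) + m.right b (D a) + m.defect D a b := by
    rw [defect]; abel
  rw [h₅, h₆] at h₁
  simp only [map_add, map_sub, sub_apply, m.left_mul, m.right_mul, m.left_right, ← mul_assoc]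
    at h₁ h₂ h₃ ⊢
  linear_combination (norm := module) h₁ - h₂ - h₃

/-- The commutator formula for `2 * defect`. -/
theorem two_smul_defect (hD : m.IsJordanDerivation D) (a b : A) :
    (2 : ℂ) • m.defect D a b = D (a * b - b * a) + ((m.left b - m.right b) (D a) -
      (m.left a - m.right a) (D b)) := by
  have h := hD.map_mul_add_mul a b
  simp only [defect, map_sub, sub_apply]
  linear_combination (norm := module) h

theorem map_commutator_commutator (hD : m.IsJordanDerivation D) {a b : A}
    (hl : m.left (a * b - b * a) = 0) (hr : m.right (a * b - b * a) = 0) :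
    D (a * (a * b - b * a) - (a * b - b * a) * a) =
      (m.left a - m.right a) ((m.left a - m.right a) (D b)) -
      (m.left a - m.right a) ((m.left b - m.right b) (D a)) := by
  have h₁ := hD.map_mul_mul_self a b
  have h₂ := hD.map_mul_add_mul (a * a) b
  have hl' := congrArg (fun F : X →L[ℂ] X => F (D a)) hl
  have hr' := congrArg (fun F : X →L[ℂ] X => F (D a)) hr
  rw [hD a] at h₂
  simp only [mul_sub, sub_mul, map_add, map_sub, sub_apply, zero_apply, m.left_mul, m.right_mul,
    m.left_right, ← mul_assoc] at h₁ h₂ hl' hr' ⊢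
  linear_combination (norm := module) h₂ - (2 : ℂ) • h₁ - hl' + hr'

end IsJordanDerivation

end Algebraic

section Quotient

variable [NonUnitalNormedRing A] [NormedSpace ℂ A] [NormedAddCommGroup X] [NormedSpace ℂ X]

/-- The action induced on the quotient by an invariant closed subspace. -/
noncomputable def quotientAction (Y : Submodule ℂ X) [IsClosed (Y : Set X)]
    (f : A →L[ℂ] X →L[ℂ] X) (hf : ∀ a, ∀ y ∈ Y, f a y ∈ Y) : A →L[ℂ] (X ⧸ Y) →L[ℂ] (X ⧸ Y) :=
  LinearMap.mkContinuous
    { toFun := fun a => Y.liftQL (Y.mkQL ∘L f a) fun y hy =>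
        (Submodule.Quotient.mk_eq_zero Y).2 (hf a y hy)
      map_add' := fun a b => by
        ext z
        obtain ⟨x, rfl⟩ := Y.mkQ_surjective z
        simp
        rfl
      map_smul' := fun c a => by
        ext z
        obtain ⟨x, rfl⟩ := Y.mkQ_surjective z
        simp
        rfl } ‖f‖ fun a => by
    refine ContinuousLinearMap.opNorm_le_bound _ (by positivity) fun z => ?_
    refine le_of_forall_pos_le_add fun ε hε => ?_
    set K := ‖f‖ * ‖a‖ with hK
    have hK0 : 0 ≤ K := by positivity
    obtain ⟨x, rfl, hx⟩ := Submodule.Quotient.norm_mk_lt z (show 0 < ε / (K + 1) by positivity)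
    refine (Submodule.Quotient.norm_mk_le Y (f a x)).trans ((f.le_opNorm₂ a x).trans ?_)
    have h1 : K * (ε / (K + 1)) ≤ ε := by
      rw [mul_div_assoc', div_le_iff₀ (by positivity)]
      nlinarith
    nlinarith [mul_le_mul_of_nonneg_left hx.le hK0]

@[simp]
theorem quotientAction_mk (Y : Submodule ℂ X) [IsClosed (Y : Set X)]
    (f : A →L[ℂ] X →L[ℂ] X) (hf : ∀ a, ∀ y ∈ Y, f a y ∈ Y) (a : A) (x : X) :
    quotientAction Y f hf a (Submodule.Quotient.mk x) = Submodule.Quotient.mk (f a x) :=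
  rfl

/-- The quotient of a Banach bimodule by a closed sub-bimodule. -/
noncomputable def quotient (m : BimoduleActions A X) (Y : Submodule ℂ X) [IsClosed (Y : Set X)]
    (hl : ∀ a, ∀ y ∈ Y, m.left a y ∈ Y) (hr : ∀ a, ∀ y ∈ Y, m.right a y ∈ Y) :
    BimoduleActions A (X ⧸ Y) where
  left := quotientAction Y m.left hl
  right := quotientAction Y m.right hr
  left_mul a b z := by
    obtain ⟨x, rfl⟩ := Submodule.Quotient.mk_surjective Y z
    simp [m.left_mul]
  right_mul a b z := by
    obtain ⟨x, rfl⟩ := Submodule.Quotient.mk_surjective Y z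
    simp [m.right_mul]
  left_right a b z := by
    obtain ⟨x, rfl⟩ := Submodule.Quotient.mk_surjective Y z
    simp [m.left_right]

end Quotient

section CStar

variable [NonUnitalCStarAlgebra A] [NormedAddCommGroup X] [NormedSpace ℂ X]
  {m : BimoduleActions A X} {D : A →L[ℂ] X}

theorem exists_norm_exp_left_sub_right_le [CompleteSpace X] (m : BimoduleActions A X) :
    ∃ C : ℝ, ∀ a : A, IsSelfAdjoint a → ∀ t : ℝ,
      ‖exp ((t * Complex.I) • (m.left a - m.right a))‖ ≤ C := by
  let : NormedAlgebra ℚ (X →L[ℂ] X) := .restrictScalars ℚ ℂ _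
  obtain ⟨C₁, hC₁⟩ := exists_norm_exp_map_le m.left fun a b => by
    ext x; exact m.left_mul a b x
  let ρ : A →L[ℂ] (X →L[ℂ] X)ᵐᵒᵖ :=
    (MulOpposite.opContinuousLinearEquiv ℂ : (X →L[ℂ] X) ≃L[ℂ] (X →L[ℂ] X)ᵐᵒᵖ) ∘L m.right
  obtain ⟨C₂, hC₂⟩ := exists_norm_exp_map_le ρ fun a b => by
    refine MulOpposite.unop_injective ?_
    ext x; exact m.right_mul a b x
  refine ⟨C₁ * C₂, fun a ha t => ?_⟩
  have hcomm : Commute (m.left a) (m.right a) := by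
    ext x; exact m.left_right a a x
  have h₂ : ‖exp (((-t : ℝ) * Complex.I) • m.right a)‖ ≤ C₂ := by
    have := hC₂ a ha (-t)
    have hρ : (((-t : ℝ) * Complex.I) • ρ a) =
      MulOpposite.op (((-t : ℝ) * Complex.I) • m.right a) := rfl
    rwa [hρ, exp_op, MulOpposite.norm_op] at this
  have hsplit : (t * Complex.I) • (m.left a - m.right a) =
      (t * Complex.I) • m.left a + ((-t : ℝ) * Complex.I) • m.right a := by
    push_cast
    module
  rw [hsplit, exp_add_of_commute ((hcomm.smul_left _).smul_right _)]
  exact (norm_mul_le _ _).trans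
    (mul_le_mul (hC₁ a ha t) h₂ (norm_nonneg _) ((norm_nonneg _).trans (hC₁ a ha t)))

/-- A Jordan derivation satisfies the Leibniz rule at self-adjoint elements whose commutator acts
trivially. -/
theorem IsJordanDerivation.defect_eq_zero_of_commutator [CompleteSpace X]
    (hD : m.IsJordanDerivation D) {a b : A} (ha : IsSelfAdjoint a) (hb : IsSelfAdjoint b)
    (hl : m.left (a * b - b * a) = 0) (hr : m.right (a * b - b * a) = 0)
    (hk : D (a * b - b * a) = 0)
    (hak : D (a * (a * b - b * a) - (a * b - b * a) * a) = 0)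
    (hbk : D (b * (a * b - b * a) - (a * b - b * a) * b) = 0) : m.defect D a b = 0 := by
  obtain ⟨C, hC⟩ := m.exists_norm_exp_left_sub_right_le
  have hcomm : Commute (m.left a - m.right a) (m.left b - m.right b) := by
    ext x
    have hl' := congrArg (fun F : X →L[ℂ] X => F x) hl
    have hr' := congrArg (fun F : X →L[ℂ] X => F x) hr
    simp only [map_sub, sub_apply, zero_apply, m.left_mul, m.right_mul] at hl' hr'
    simp only [mul_apply_eq_comp, sub_apply, map_sub, m.left_right]
    linear_combination (norm := module) hl' - hr'
  have hw := hD.two_smul_defect a b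
  rw [hk, zero_add] at hw
  have hzero : (2 : ℂ) • m.defect D a b = 0 := by
    refine eq_zero_of_mem_ker_of_eq_sub hcomm (hC a ha) (hC b hb) hw ?_ ?_
    · have h := hD.map_commutator_commutator hl hr
      rw [hak] at h
      rw [hw, map_sub, ← neg_sub, ← h, neg_zero]
    · have hneg : b * a - a * b = -(a * b - b * a) := (neg_sub _ _).symm
      have h := hD.map_commutator_commutator (a := b) (b := a) (by rw [hneg, map_neg, hl, neg_zero])
        (by rw [hneg, map_neg, hr, neg_zero])
      rw [hneg, mul_neg, neg_mul, sub_neg_eq_add, neg_add_eq_sub, ← neg_sub, map_neg, hbk,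
        neg_zero] at h
      rw [hw, map_sub, ← h]
  exact (smul_eq_zero_iff_right two_ne_zero).1 hzero

/-- The elements annihilating the sub-bimodule generated by `w`. -/
def annihilatorSet (m : BimoduleActions A X) (w : X) : Set A :=
  {j | (m.left j w = 0 ∧ m.right j w = 0) ∧ ∀ c, m.left (j * c) w = 0 ∧ m.right (c * j) w = 0}

theorem isClosed_annihilatorSet (m : BimoduleActions A X) (w : X) :
    IsClosed (m.annihilatorSet w) := by
  have hl : ∀ f : A → A, Continuous f → IsClosed {j | m.left (f j) w = 0} := fun f hf =>
    isClosed_eq ((m.left.continuous.comp hf).clm_apply continuous_const) continuous_const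
  have hr : ∀ f : A → A, Continuous f → IsClosed {j | m.right (f j) w = 0} := fun f hf =>
    isClosed_eq ((m.right.continuous.comp hf).clm_apply continuous_const) continuous_const
  simp only [annihilatorSet, Set.ofPred_and, Set.ofPred_forall]
  exact ((hl _ continuous_id).inter (hr _ continuous_id)).inter <| isClosed_iInter fun c =>
    (hl _ (by fun_prop)).inter (hr _ (by fun_prop))

theorem mul_mem_annihilatorSet_left {w : X} (a : A) {j : A} (hj : j ∈ m.annihilatorSet w) :
    a * j ∈ m.annihilatorSet w := by
  refine ⟨⟨?_, (hj.2 a).2⟩, fun c => ⟨?_, ?_⟩⟩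
  · rw [m.left_mul, hj.1.1, map_zero]
  · rw [mul_assoc, m.left_mul, (hj.2 c).1, map_zero]
  · rw [← mul_assoc]; exact (hj.2 _).2

theorem mul_mem_annihilatorSet_right {w : X} (a : A) {j : A} (hj : j ∈ m.annihilatorSet w) :
    j * a ∈ m.annihilatorSet w := by
  refine ⟨⟨(hj.2 a).1, ?_⟩, fun c => ⟨?_, ?_⟩⟩
  · rw [m.right_mul, hj.1.2, map_zero]
  · rw [mul_assoc]; exact (hj.2 _).1
  · rw [← mul_assoc, m.right_mul, (hj.2 c).2, map_zero]

theorem mem_annihilatorSet_of_star_mul_self_mem {w : X} {x : A}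
    (hx : star x * x ∈ m.annihilatorSet w) : x ∈ m.annihilatorSet w :=
  mem_of_star_mul_self_mem (m.isClosed_annihilatorSet w)
    (fun a _ hj => mul_mem_annihilatorSet_left a hj) hx

/-- The annihilator of the sub-bimodule generated by `w`, as a C⋆-subalgebra. -/
def annihilator (m : BimoduleActions A X) (w : X) : NonUnitalStarSubalgebra ℂ A where
  carrier := m.annihilatorSet w
  add_mem' := fun {a b} ha hb => by
    refine ⟨by simp [ha.1, hb.1], fun c => ?_⟩
    simp [add_mul, mul_add, ha.2 c, hb.2 c]
  zero_mem' := by simp [annihilatorSet]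
  mul_mem' := fun {a b} _ hb => mul_mem_annihilatorSet_left a hb
  smul_mem' := fun s a ha => by
    refine ⟨by simp [ha.1], fun c => ?_⟩
    rw [smul_mul_assoc, mul_smul_comm]
    simp [ha.2 c]
  star_mem' := fun {a} ha => mem_annihilatorSet_of_star_mul_self_mem <| by
    rw [star_star]
    exact mul_mem_annihilatorSet_right _ ha

theorem mem_annihilator {w : X} {j : A} : j ∈ m.annihilator w ↔ j ∈ m.annihilatorSet w :=
  Iff.rfl

instance isClosed_annihilator (w : X) : IsClosed (m.annihilator w : Set A) :=
  m.isClosed_annihilatorSet w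

theorem left_eq_zero_of_mem_annihilator {w : X} {j : A} (hj : j ∈ m.annihilator w) :
    m.left j w = 0 :=
  hj.1.1

theorem right_eq_zero_of_mem_annihilator {w : X} {j : A} (hj : j ∈ m.annihilator w) :
    m.right j w = 0 :=
  hj.1.2

theorem IsJordanDerivation.commutator_mem_annihilator (hD : m.IsJordanDerivation D) {a b : A}
    (ha : IsSelfAdjoint a) (hb : IsSelfAdjoint b) :
    a * b - b * a ∈ m.annihilator (m.defect D a b) := by
  set w := m.defect D a b with hw
  set k := a * b - b * a with hk
  have hkstar : star k = -k := by
    rw [hk, star_sub, star_mul, star_mul, ha.star_eq, hb.star_eq, neg_sub]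
  have hanti : ∀ c, m.right k (m.right c w) = -m.left k (m.left c w) := fun c =>
    eq_neg_of_add_eq_zero_left (hD.right_defect_add_left_defect a b c)
  have hright : ∀ c d, m.right k (m.right d (m.right k (m.right c w))) =
      m.left k (m.left c (m.left k (m.left d w))) := fun c d => by
    rw [hanti c, map_neg, map_neg, ← m.left_right, ← m.left_right, ← m.left_right,
      ← m.left_right, hanti d, map_neg, map_neg, neg_neg]
  have hleft : ∀ c d, m.left k (m.left c (m.left k (m.left d w))) = 0 := fun c d => by
    have h := hanti (c * k * d)
    rw [m.right_mul, m.right_mul, m.left_mul, m.left_mul, hright] at h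
    linear_combination (norm := module) (1 / 2 : ℂ) • h
  have hmem : k * k * (k * k) ∈ m.annihilatorSet w := by
    refine ⟨⟨?_, ?_⟩, fun c => ⟨?_, ?_⟩⟩
    · simp only [m.left_mul, hleft]
    · simp only [m.right_mul, hright, hleft]
    · have := hleft k (k * c)
      simpa only [m.left_mul] using this
    · have := hright (c * k) k
      rw [hleft] at this
      simpa only [m.right_mul] using this
  have hsq : k * k ∈ m.annihilatorSet w := mem_annihilatorSet_of_star_mul_self_mem <| by
    rwa [star_mul, hkstar, neg_mul_neg]
  refine mem_annihilatorSet_of_star_mul_self_mem ?_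
  rw [hkstar, neg_mul]
  exact mem_annihilator.1 (neg_mem (mem_annihilator.2 hsq))

/-- The closed sub-bimodule generated by the ranges of the actions of the annihilator of `w`. -/
def annihilatorRange (m : BimoduleActions A X) (w : X) : Submodule ℂ X :=
  (Submodule.span ℂ {y | ∃ j ∈ m.annihilator w, ∃ x,
    y = m.left j x ∨ y = m.right j x}).topologicalClosure

instance isClosed_annihilatorRange (w : X) : IsClosed (m.annihilatorRange w : Set X) :=
  Submodule.isClosed_topologicalClosure _

theorem left_mem_annihilatorRange {w : X} {j : A} (hj : j ∈ m.annihilator w) (x : X) :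
    m.left j x ∈ m.annihilatorRange w :=
  Submodule.le_topologicalClosure _ (Submodule.subset_span ⟨j, hj, x, .inl rfl⟩)

theorem right_mem_annihilatorRange {w : X} {j : A} (hj : j ∈ m.annihilator w) (x : X) :
    m.right j x ∈ m.annihilatorRange w :=
  Submodule.le_topologicalClosure _ (Submodule.subset_span ⟨j, hj, x, .inr rfl⟩)

theorem map_mem_annihilatorRange {w : X} (F : X →L[ℂ] X)
    (hl : ∀ j ∈ m.annihilator w, ∀ x, F (m.left j x) ∈ m.annihilatorRange w)
    (hr : ∀ j ∈ m.annihilator w, ∀ x, F (m.right j x) ∈ m.annihilatorRange w)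
    {y : X} (hy : y ∈ m.annihilatorRange w) : F y ∈ m.annihilatorRange w := by
  have hle : m.annihilatorRange w ≤ (m.annihilatorRange w).comap F.toLinearMap := by
    refine Submodule.topologicalClosure_minimal _ (Submodule.span_le.2 ?_)
      ((isClosed_annihilatorRange w).preimage F.continuous)
    rintro _ ⟨j, hj, x, rfl | rfl⟩
    · exact hl j hj x
    · exact hr j hj x
  exact hle hy

theorem left_mem_annihilatorRange_of_mem {w : X} (a : A) {y : X}
    (hy : y ∈ m.annihilatorRange w) : m.left a y ∈ m.annihilatorRange w := by
  refine map_mem_annihilatorRange (m.left a) (fun j hj x => ?_) (fun j hj x => ?_) hy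
  · rw [← m.left_mul]
    exact left_mem_annihilatorRange (mul_mem_annihilatorSet_left a hj) x
  · rw [m.left_right]
    exact right_mem_annihilatorRange hj _

theorem right_mem_annihilatorRange_of_mem {w : X} (a : A) {y : X}
    (hy : y ∈ m.annihilatorRange w) : m.right a y ∈ m.annihilatorRange w := by
  refine map_mem_annihilatorRange (m.right a) (fun j hj x => ?_) (fun j hj x => ?_) hy
  · rw [← m.left_right]
    exact left_mem_annihilatorRange hj _
  · rw [← m.right_mul]
    exact right_mem_annihilatorRange (mul_mem_annihilatorSet_right a hj) x

/-- The annihilator of `w` has a bounded two-sided approximate unit. -/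
theorem exists_approximateUnit_annihilator (m : BimoduleActions A X) (w : X) :
    ∃ F : Filter (m.annihilator w), F.IsApproximateUnit ∧
      ∀ᶠ e : m.annihilator w in F, ‖(e : A)‖ ≤ 1 := by
  let := CStarAlgebra.spectralOrder (m.annihilator w)
  have := CStarAlgebra.spectralOrderedRing (m.annihilator w)
  have h := CStarAlgebra.increasingApproximateUnit (m.annihilator w)
  exact ⟨_, h.toIsApproximateUnit, h.eventually_norm⟩

theorem IsJordanDerivation.map_mem_annihilatorRange (hD : m.IsJordanDerivation D) {w : X} {j : A}
    (hj : j ∈ m.annihilator w) : D j ∈ m.annihilatorRange w := by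
  obtain ⟨F, hF, -⟩ := m.exists_approximateUnit_annihilator w
  have := hF.neBot
  have hlim : Tendsto (fun e : m.annihilator w => D (e * j) + D (j * e)) F (𝓝 (D j + D j)) := by
    have h₁ := (continuous_subtype_val.tendsto _).comp (hF.tendsto_mul_right ⟨j, hj⟩)
    have h₂ := (continuous_subtype_val.tendsto _).comp (hF.tendsto_mul_left ⟨j, hj⟩)
    exact ((D.continuous.tendsto _).comp h₁).add ((D.continuous.tendsto _).comp h₂)
  have hmem : D j + D j ∈ m.annihilatorRange w := by
    refine (isClosed_annihilatorRange w).mem_of_tendsto hlim (.of_forall fun e => ?_)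
    rw [hD.map_mul_add_mul]
    exact add_mem
      (add_mem (left_mem_annihilatorRange e.2 _) (right_mem_annihilatorRange hj _))
      (add_mem (left_mem_annihilatorRange hj _) (right_mem_annihilatorRange e.2 _))
  rw [← two_smul ℂ] at hmem
  exact ((m.annihilatorRange w).smul_mem_iff two_ne_zero).1 hmem

theorem eq_zero_of_mem_annihilatorRange {w : X} (hw : w ∈ m.annihilatorRange w) : w = 0 := by
  obtain ⟨F, hF, hbdd⟩ := m.exists_approximateUnit_annihilator w
  have := hF.neBot
  -- compression by `1 - e` on both sides
  let P : A → X → X := fun e y => y - m.left e y - m.right e (y - m.left e y)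
  have hP' : ∀ e y, P e y = y - m.right e y - m.left e (y - m.right e y) := fun e y => by
    simp only [P, map_sub, m.left_right]; abel
  have hsub : ∀ e y z, P e (y - z) = P e y - P e z := fun e y z => by
    simp only [P, map_sub]; abel
  have hfix : ∀ e ∈ m.annihilator w, P e w = w := fun e he => by
    simp [P, left_eq_zero_of_mem_annihilator he, right_eq_zero_of_mem_annihilator he]
  have hl1 : ∀ e : A, ‖e‖ ≤ 1 → ∀ y, ‖m.left e y‖ ≤ ‖m.left‖ * ‖y‖ := fun e he y =>
    (m.left e).le_of_opNorm_le (by simpa using m.left.le_opNorm_of_le he) y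
  have hr1 : ∀ e : A, ‖e‖ ≤ 1 → ∀ y, ‖m.right e y‖ ≤ ‖m.right‖ * ‖y‖ := fun e he y =>
    (m.right e).le_of_opNorm_le (by simpa using m.right.le_opNorm_of_le he) y
  have hPle : ∀ e : A, ‖e‖ ≤ 1 → ∀ y, ‖P e y‖ ≤ (1 + ‖m.right‖) * ‖y - m.left e y‖ :=
    fun e he y => (norm_sub_le _ _).trans (by linarith [hr1 e he (y - m.left e y)])
  have hPle' : ∀ e : A, ‖e‖ ≤ 1 → ∀ y, ‖P e y‖ ≤ (1 + ‖m.left‖) * ‖y - m.right e y‖ :=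
    fun e he y => by
      rw [hP']
      exact (norm_sub_le _ _).trans (by linarith [hl1 e he (y - m.right e y)])
  have hPbdd : ∀ e : A, ‖e‖ ≤ 1 → ∀ y, ‖P e y‖ ≤ (1 + ‖m.right‖) * ((1 + ‖m.left‖) * ‖y‖) :=
    fun e he y => (hPle e he y).trans <| by
      gcongr
      exact (norm_sub_le _ _).trans (by linarith [hl1 e he y])
  have hzero : ∀ y ∈ Submodule.span ℂ
      {y | ∃ j ∈ m.annihilator w, ∃ x, y = m.left j x ∨ y = m.right j x},
      Tendsto (fun e : m.annihilator w => P e y) F (𝓝 0) := by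
    intro y hy
    induction hy using Submodule.span_induction with
    | mem y hy =>
      obtain ⟨j, hj, x, rfl | rfl⟩ := hy
      · have h₁ := (continuous_subtype_val.tendsto _).comp (hF.tendsto_mul_right ⟨j, hj⟩)
        have h₂ : Tendsto (fun e : m.annihilator w => m.left (e * j) x) F (𝓝 (m.left j x)) :=
          ((m.left.flip x).continuous.tendsto _).comp h₁
        have h₃ := ((tendsto_const_nhds (x := m.left j x)).sub h₂).norm.const_mul (1 + ‖m.right‖)
        rw [sub_self, norm_zero, mul_zero] at h₃
        refine squeeze_zero_norm' (hbdd.mono fun e he => ?_) h₃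
        rw [m.left_mul]
        exact hPle e he _
      · have h₁ := (continuous_subtype_val.tendsto _).comp (hF.tendsto_mul_left ⟨j, hj⟩)
        have h₂ : Tendsto (fun e : m.annihilator w => m.right (j * e) x) F (𝓝 (m.right j x)) :=
          ((m.right.flip x).continuous.tendsto _).comp h₁
        have h₃ := ((tendsto_const_nhds (x := m.right j x)).sub h₂).norm.const_mul (1 + ‖m.left‖)
        rw [sub_self, norm_zero, mul_zero] at h₃
        refine squeeze_zero_norm' (hbdd.mono fun e he => ?_) h₃
        rw [m.right_mul]
        exact hPle' e he _
    | zero => simp [P]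
    | add y z _ _ hy hz =>
      refine (add_zero (0 : X) ▸ hy.add hz).congr fun e => ?_
      simp only [P, map_add, map_sub]; abel
    | smul c y _ hy =>
      have h := hy.const_smul c
      rw [smul_zero] at h
      refine h.congr fun e => ?_
      simp only [P, map_smul, map_sub, smul_sub]
  set K := (1 + ‖m.right‖) * (1 + ‖m.left‖) with hK
  have hKpos : 0 < K := by positivity
  refine norm_le_zero_iff.1 (le_of_forall_pos_le_add fun ε hε => ?_)
  obtain ⟨y, hy, hwy⟩ := Metric.mem_closure_iff.1 hw (ε / (2 * K)) (by positivity)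
  have hsmall : ∀ᶠ e : m.annihilator w in F, ‖P e y‖ < ε / 2 :=
    (hzero y hy).norm.eventually_lt_const (by simpa using hε)
  obtain ⟨e, he1, he2⟩ := (hbdd.and hsmall).exists
  have h₁ : ‖P e (w - y)‖ ≤ ε / 2 := by
    refine (hPbdd e he1 _).trans ?_
    rw [dist_eq_norm] at hwy
    calc _ = K * ‖w - y‖ := by rw [hK]; ring
      _ ≤ K * (ε / (2 * K)) := by gcongr
      _ = ε / 2 := by field_simp
  have h₂ : w = P e (w - y) + P e y := by rw [hsub, hfix e e.2]; abel
  calc ‖w‖ = ‖P e (w - y) + P e y‖ := by rw [← h₂]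
    _ ≤ _ := norm_add_le _ _
    _ ≤ 0 + ε := by linarith

theorem IsJordanDerivation.defect_eq_zero_of_isSelfAdjoint [CompleteSpace X]
    (hD : m.IsJordanDerivation D) {a b : A} (ha : IsSelfAdjoint a) (hb : IsSelfAdjoint b) :
    m.defect D a b = 0 := by
  set w := m.defect D a b with hw
  have hk : a * b - b * a ∈ m.annihilator w := hD.commutator_mem_annihilator ha hb
  let Y := m.annihilatorRange w
  let m' := m.quotient Y (fun a _ => left_mem_annihilatorRange_of_mem a)
    (fun a _ => right_mem_annihilatorRange_of_mem a)
  let D' : A →L[ℂ] X ⧸ Y := Y.mkQL ∘L D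
  have hD' : m'.IsJordanDerivation D' := fun c => congrArg Y.mkQ (hD c)
  have hvanish : ∀ j ∈ m.annihilator w, D' j = 0 := fun j hj =>
    (Submodule.Quotient.mk_eq_zero Y).2 (hD.map_mem_annihilatorRange hj)
  have hdefect : m'.defect D' a b = 0 := by
    refine hD'.defect_eq_zero_of_commutator ha hb ?_ ?_ (hvanish _ hk) (hvanish _ ?_)
      (hvanish _ ?_)
    · ext z
      obtain ⟨x, rfl⟩ := Submodule.Quotient.mk_surjective Y z
      exact (Submodule.Quotient.mk_eq_zero Y).2 (left_mem_annihilatorRange hk x)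
    · ext z
      obtain ⟨x, rfl⟩ := Submodule.Quotient.mk_surjective Y z
      exact (Submodule.Quotient.mk_eq_zero Y).2 (right_mem_annihilatorRange hk x)
    · exact sub_mem (mul_mem_annihilatorSet_left a hk : _ ∈ m.annihilator w)
        (mul_mem_annihilatorSet_right a hk)
    · exact sub_mem (mul_mem_annihilatorSet_left b hk : _ ∈ m.annihilator w)
        (mul_mem_annihilatorSet_right b hk)
  exact eq_zero_of_mem_annihilatorRange ((Submodule.Quotient.mk_eq_zero Y).1 hdefect)

/-- Bounded Jordan derivations of C⋆-algebras satisfy the Leibniz rule. -/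
theorem IsJordanDerivation.defect_eq_zero [CompleteSpace X]
    (hD : m.IsJordanDerivation D) (a b : A) : m.defect D a b = 0 := by
  have hadd₁ : ∀ x y z, m.defect D (x + Complex.I • y) z =
      m.defect D x z + Complex.I • m.defect D y z := fun x y z => by
    simp only [defect, add_mul, smul_mul_assoc, map_add, map_smul, add_apply, smul_apply]
    module
  have hadd₂ : ∀ x y z, m.defect D z (x + Complex.I • y) =
      m.defect D z x + Complex.I • m.defect D z y := fun x y z => by
    simp only [defect, mul_add, mul_smul_comm, map_add, map_smul, add_apply, smul_apply]
    module
  have hsa : ∀ x y : selfAdjoint A, m.defect D x y = 0 := fun x y =>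
    hD.defect_eq_zero_of_isSelfAdjoint x.2 y.2
  rw [← realPart_add_I_smul_imaginaryPart a, ← realPart_add_I_smul_imaginaryPart b, hadd₁, hadd₂,
    hadd₂]
  simp [hsa]

end CStar

end BimoduleActions


/-- (Johnson) Every bounded Jordan derivation from a C*-algebra `A` into a Banach
`A`-bimodule `X` is an associative derivation.  The bimodule actions are given by the
bounded bilinear maps `l` and `r`. -/
theorem johnson_jordan_derivation (A X : Type*)
    [NonUnitalNormedRing A] [StarRing A] [CStarRing A] [CompleteSpace A]
    [NormedSpace ℂ A] [IsScalarTower ℂ A A] [SMulCommClass ℂ A A] [StarModule ℂ A]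
    [NormedAddCommGroup X] [NormedSpace ℂ X] [CompleteSpace X]
    (l : A →ₗ[ℂ] X →ₗ[ℂ] X) (r : X →ₗ[ℂ] A →ₗ[ℂ] X)
    (hlbdd : ∃ C : ℝ, ∀ (a : A) (x : X), ‖l a x‖ ≤ C * ‖a‖ * ‖x‖)
    (hrbdd : ∃ C : ℝ, ∀ (x : X) (a : A), ‖r x a‖ ≤ C * ‖x‖ * ‖a‖)
    (hmod₁ : ∀ (a b : A) (x : X), l a (l b x) = l (a * b) x)
    (hmod₂ : ∀ (a b : A) (x : X), l a (r x b) = r (l a x) b)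
    (hmod₃ : ∀ (a b : A) (x : X), r (r x a) b = r x (a * b))
    (D : A →L[ℂ] X)
    (hD : ∀ a : A, D (a * a) = l a (D a) + r (D a) a) :
    ∀ a b : A, D (a * b) = l a (D b) + r (D a) b := by
  obtain ⟨Cl, hl⟩ := hlbdd
  obtain ⟨Cr, hr⟩ := hrbdd
  let : NonUnitalCStarAlgebra A := {}
  let m : BimoduleActions A X :=
    { left := l.mkContinuous₂ Cl hl
      right := r.flip.mkContinuous₂ Cr fun a x => (hr x a).trans_eq (by ring)
      left_mul := fun a b x => (hmod₁ a b x).symm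
      right_mul := fun a b x => (hmod₃ a b x).symm
      left_right := fun a b x => hmod₂ a b x }
  intro a b
  have h : D (a * b) - l a (D b) - r (D a) b = 0 :=
    BimoduleActions.IsJordanDerivation.defect_eq_zero (m := m) (D := D) hD a b
  rwa [sub_sub, sub_eq_zero] at h
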